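/- arXiv:1009.4966 — 4 statements merged into one kernel-verified Lean document; each statement's English description precedes it below -/
import Mathlib

section
/- Let K be a finite field with q elements, let v_1,…,v_s ∈ {0,1}^n be the characteristic vectors of the edges of a clutter, let X be the algebraic toric set parameterized by y^{v_1},…,y^{v_s}, and let T = {[x] : x ∈ (K*)^s} be the projective torus in ℙ^{s−1}. Then the vanishing ideal I(X) is a complete intersection (i.e., it can be generated by s−1 homogeneous polynomials) if and only if X = T. -/
open MvPolynomial

/-- The projective torus in `ℙ^(s-1)` over `K`: the classes of points all of whose
coordinates are nonzero (a condition invariant under scaling, tested on the chosen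
representative). -/
noncomputable def projTorus (K : Type) [Field K] (s : ℕ) :
    Set (Projectivization K (Fin s → K)) :=
  {p | ∀ i, p.rep i ≠ 0}

/-- The algebraic toric set `X ⊆ ℙ^(s-1)` parameterized by the monomials
`y^{v_1},…,y^{v_s}`: the classes `[(x^{v_1},…,x^{v_s})]` for `x ∈ (K*)^n`. -/
def toricSet (K : Type) [Field K] {n s : ℕ} (hs : 1 ≤ s)
    (v : Fin s → Fin n → ℕ) : Set (Projectivization K (Fin s → K)) :=
  {p | ∃ x : Fin n → K, ∃ hx : ∀ t, x t ≠ 0,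
    p = Projectivization.mk K (fun j => ∏ t, x t ^ v j t)
      (by
        intro h0
        have h1 := congrFun h0 ⟨0, hs⟩
        simp only [Pi.zero_apply] at h1
        exact Finset.prod_ne_zero_iff.mpr (fun t _ => pow_ne_zero _ (hx t)) h1)}

lemma aux_smul {K : Type} [Field K] {s : ℕ} (f : MvPolynomial (Fin s) K) (d : ℕ)
    (hd : f.IsHomogeneous d) (c : K) (y : Fin s → K) :
    eval (c • y) f = c ^ d * eval y f := by
  rw [eval_eq', eval_eq', Finset.mul_sum]
  refine Finset.sum_congr rfl fun a ha => ?_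
  have hda : ∑ j, a j = d := by
    have := hd (mem_support_iff.1 ha)
    rw [← this]
    simp [Finsupp.weight_apply, Finsupp.sum_fintype]
  simp only [Pi.smul_apply, smul_eq_mul, mul_pow, Finset.prod_mul_distrib,
    Finset.prod_pow_eq_pow_sum, hda]
  ring

lemma aux_char_sum {K : Type} [Field K] [Fintype K] {n s : ℕ}
    (v : Fin s → Fin n → ℕ) (f : MvPolynomial (Fin s) K)
    (hf : ∀ x : Fin n → K, (∀ t, x t ≠ 0) →
            eval (fun j : Fin s => ∏ t, x t ^ v j t) f = 0) (w : Fin n → ℕ) :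
    ∑ a ∈ f.support with (∀ t, (Fintype.card K - 1) ∣ (∑ j, a j * v j t) + w t), coeff a f = 0 := by
  classical
  have h0 : ∑ x : Fin n → Kˣ, (∏ t, (x t : K) ^ w t) *
      eval (fun j : Fin s => ∏ t, (x t : K) ^ v j t) f = 0 := by
    apply Finset.sum_eq_zero
    intro x _
    rw [hf (fun t => (x t : K)) (fun t => (x t).ne_zero), mul_zero]
  have h1 : ∀ x : Fin n → Kˣ, (∏ t, (x t : K) ^ w t) *
      eval (fun j : Fin s => ∏ t, (x t : K) ^ v j t) f =
      ∑ a ∈ f.support, coeff a f * ∏ t, (x t : K) ^ ((∑ j, a j * v j t) + w t) := by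
    intro x
    rw [eval_eq', Finset.mul_sum]
    refine Finset.sum_congr rfl fun a _ => ?_
    have : ∏ j, (∏ t, (x t : K) ^ v j t) ^ a j = ∏ t, (x t : K) ^ (∑ j, a j * v j t) := by
      simp_rw [← Finset.prod_pow_eq_pow_sum, ← Finset.prod_pow]
      rw [Finset.prod_comm]
      refine Finset.prod_congr rfl fun t _ => Finset.prod_congr rfl fun j _ => ?_
      rw [← pow_mul, mul_comm]
    rw [this]
    simp_rw [pow_add, Finset.prod_mul_distrib]
    ring
  simp_rw [h1] at h0
  rw [Finset.sum_comm] at h0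
  simp_rw [← Finset.mul_sum] at h0
  have h2 : ∀ e : Fin n → ℕ, ∑ x : Fin n → Kˣ, ∏ t, (x t : K) ^ (e t) =
      if ∀ t, (Fintype.card K - 1) ∣ e t then (-1) ^ n else 0 := by
    intro e
    have := Finset.prod_univ_sum (fun _ : Fin n => (Finset.univ : Finset Kˣ))
      (fun t (u : Kˣ) => (u : K) ^ e t)
    rw [Fintype.piFinset_univ] at this
    rw [← this]
    simp_rw [FiniteField.sum_pow_units]
    split_ifs with h
    · rw [Finset.prod_congr rfl (fun t _ => if_pos (h t))]
      simp
    · push Not at h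
      obtain ⟨t, ht⟩ := h
      exact Finset.prod_eq_zero (Finset.mem_univ t) (if_neg ht)
  simp_rw [h2] at h0
  rw [Finset.sum_filter]
  have h3 : (∑ a ∈ f.support, (if (∀ t, (Fintype.card K - 1) ∣ (∑ j, a j * v j t) + w t)
      then coeff a f else 0)) * (-1) ^ n = 0 := by
    rw [Finset.sum_mul]
    refine Eq.trans ?_ h0
    refine Finset.sum_congr rfl fun a _ => ?_
    split_ifs <;> simp
  exact (mul_eq_zero.mp h3).resolve_right (by simp)

lemma aux_low {K : Type} [Field K] [Fintype K] {n s : ℕ}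
    (v : Fin s → Fin n → ℕ) (hv01 : ∀ i t, v i t ≤ 1)
    (hclutter : ∀ i j : Fin s, i ≠ j → ¬ ∀ t, v i t ≤ v j t)
    (f : MvPolynomial (Fin s) K) (d : ℕ) (hd : f.IsHomogeneous d)
    (hf : ∀ x : Fin n → K, (∀ t, x t ≠ 0) →
            eval (fun j : Fin s => ∏ t, x t ^ v j t) f = 0)
    (b : ℕ) (hb : b < Fintype.card K - 1) (i : Fin s) : coeff (Finsupp.single i b) f = 0 := by
  classical
  by_contra hne
  have hdeg : b = d := by
    have := hd hne
    simpa [Finsupp.weight_apply] using this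
  subst hdeg
  obtain ⟨m, hm⟩ : ∃ m, Fintype.card K - 1 = m + 1 := ⟨Fintype.card K - 2, by omega⟩
  have h := aux_char_sum v f hf (fun t => m * (b * v i t))
  rw [hm] at h hb
  rw [Finset.sum_eq_single (Finsupp.single i b)] at h
  · exact hne h
  · intro a ha hai
    exfalso
    simp only [Finset.mem_filter, mem_support_iff] at ha
    obtain ⟨ha, hdiv⟩ := ha
    have hda : ∑ j, a j = b := by
      have := hd ha
      rw [← this]
      simp [Finsupp.weight_apply, Finsupp.sum_fintype]
    have key : ∀ t, ∑ j, a j * v j t = b * v i t := by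
      intro t
      have h1 : ∑ j, a j * v j t ≤ b := by
        rw [← hda]
        exact Finset.sum_le_sum fun j _ => by nlinarith [hv01 j t, Nat.zero_le (a j)]
      have h2 : b * v i t ≤ b := by nlinarith [hv01 i t]
      have h3 := hdiv t
      have h4 : (∑ j, a j * v j t) ≡ b * v i t [MOD (m+1)] := by
        apply Nat.ModEq.add_right_cancel' (m * (b * v i t))
        have e1 : b * v i t + m * (b * v i t) = (m+1) * (b * v i t) := by ring
        rw [e1]
        exact ((Nat.modEq_zero_iff_dvd).2 h3).trans ((Nat.modEq_zero_iff_dvd).2 (Dvd.intro _ rfl)).symm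
      exact Nat.ModEq.eq_of_lt_of_lt h4 (by omega) (by omega)
    have hz : ∀ j, j ≠ i → a j = 0 := by
      intro j hj
      by_contra hj0
      apply hclutter j i hj
      intro t
      by_contra hlt
      have hj1 := hv01 j t
      have e1 : v j t = 1 := by omega
      have e2 : v i t = 0 := by omega
      have hk := key t
      rw [e2, mul_zero, Finset.sum_eq_zero_iff] at hk
      have := hk j (Finset.mem_univ j)
      rw [e1, mul_one] at this
      exact hj0 this
    apply hai
    ext j
    by_cases hj : j = i
    · subst hj
      rw [Finset.sum_eq_single j (fun k _ hk => hz k hk) (by simp)] at hda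
      simp [hda]
    · rw [hz j hj, Finsupp.single_eq_of_ne hj]
  · intro hni
    exfalso
    apply hni
    simp only [Finset.mem_filter, mem_support_iff]
    refine ⟨hne, fun t => ?_⟩
    rw [Finset.sum_eq_single i]
    · rw [Finsupp.single_eq_same]
      exact ⟨b * v i t, by ring⟩
    · intro j _ hj
      rw [Finsupp.single_eq_of_ne hj, zero_mul]
    · simp

lemma aux_toric_iff {K : Type} [Field K] {n s : ℕ} (hs : 1 ≤ s) (v : Fin s → Fin n → ℕ) :
    toricSet K hs v = projTorus K s ↔
      ∀ y : Fin s → K, (∀ i, y i ≠ 0) → ∃ x : Fin n → K, (∀ t, x t ≠ 0) ∧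
        ∃ c : K, ∀ j, y j = c * ∏ t, x t ^ v j t := by
  constructor
  · intro h y hy
    have hy0 : y ≠ 0 := fun h0 => hy ⟨0, hs⟩ (by rw [h0]; rfl)
    have hm : Projectivization.mk K y hy0 ∈ projTorus K s := by
      intro i
      obtain ⟨a, ha⟩ := Projectivization.exists_smul_eq_mk_rep K y hy0
      rw [← ha]
      simp [Units.smul_def, hy i]
    rw [← h] at hm
    obtain ⟨x, hx, he⟩ := hm
    rw [Projectivization.mk_eq_mk_iff'] at he
    obtain ⟨a, ha⟩ := he
    exact ⟨x, hx, a, fun j => by rw [← ha]; rfl⟩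
  · intro h
    ext p
    constructor
    · rintro ⟨x, hx, rfl⟩ i
      obtain ⟨a, ha⟩ := Projectivization.exists_smul_eq_mk_rep K
        (fun j => ∏ t, x t ^ v j t) (by
        intro h0
        have h1 := congrFun h0 ⟨0, hs⟩
        simp only [Pi.zero_apply] at h1
        exact Finset.prod_ne_zero_iff.mpr (fun t _ => pow_ne_zero _ (hx t)) h1)
      rw [← ha]
      simp only [Units.smul_def, Pi.smul_apply, smul_eq_mul]
      exact mul_ne_zero a.ne_zero (Finset.prod_ne_zero_iff.mpr (fun t _ => pow_ne_zero _ (hx t)))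
    · intro hp
      obtain ⟨x, hx, c, hc⟩ := h p.rep hp
      refine ⟨x, hx, ?_⟩
      rw [← Projectivization.mk_rep p, Projectivization.mk_eq_mk_iff']
      exact ⟨c, funext fun j => by simp [hc j]⟩

lemma aux_sep {K : Type} [Field K] [Fintype K] {n s : ℕ} (hs : 1 ≤ s) (v : Fin s → Fin n → ℕ)
    (h : ∀ f : MvPolynomial (Fin s) K, (∃ e, f.IsHomogeneous e) →
      (∀ x : Fin n → K, (∀ t, x t ≠ 0) → eval (fun j : Fin s => ∏ t, x t ^ v j t) f = 0) →
      ∀ y : Fin s → K, (∀ i, y i ≠ 0) → eval y f = 0)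
    (y : Fin s → K) (hy : ∀ i, y i ≠ 0) : ∃ x : Fin n → K, (∀ t, x t ≠ 0) ∧
        ∃ c : K, ∀ j, y j = c * ∏ t, x t ^ v j t := by
  classical
  by_contra hcon
  push Not at hcon
  have hsep : ∀ x : Fin n → Kˣ, ∃ L : MvPolynomial (Fin s) K, L.IsHomogeneous 1 ∧
      eval (fun j : Fin s => ∏ t, (x t : K) ^ v j t) L = 0 ∧ eval y L ≠ 0 := by
    intro x
    set z : Fin s → K := fun j => ∏ t, (x t : K) ^ v j t with hz
    have hz0 : ∀ j, z j ≠ 0 := fun j =>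
      Finset.prod_ne_zero_iff.mpr (fun t _ => pow_ne_zero _ (x t).ne_zero)
    obtain ⟨j, hj⟩ := hcon (fun t => (x t : K)) (fun t => (x t).ne_zero) (y ⟨0, hs⟩ / z ⟨0, hs⟩)
    change y j ≠ _ * z j at hj
    refine ⟨C (z ⟨0, hs⟩) * X j - C (z j) * X ⟨0, hs⟩, ?_, ?_, ?_⟩
    · apply IsHomogeneous.sub
      · exact (isHomogeneous_X K j).C_mul _
      · exact (isHomogeneous_X K _).C_mul _
    · simp; ring
    · simp only [map_sub, map_mul, eval_C, eval_X]
      intro h0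
      apply hj
      have := hz0 ⟨0, hs⟩
      field_simp
      linear_combination h0
  choose L hL1 hL2 hL3 using hsep
  have := h (∏ x, L x) ⟨_, IsHomogeneous.prod Finset.univ L (fun _ => 1) (fun x _ => hL1 x)⟩ ?_ y hy
  · rw [map_prod, Finset.prod_eq_zero_iff] at this
    obtain ⟨x, _, hx⟩ := this
    exact hL3 x hx
  · intro x hx
    rw [map_prod]
    exact Finset.prod_eq_zero (Finset.mem_univ (fun t => Units.mk0 (x t) (hx t)))
      (hL2 (fun t => Units.mk0 (x t) (hx t)))

lemma aux_torus {K : Type} [Field K] [Fintype K] {r : ℕ}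
    (f : MvPolynomial (Fin (r+1)) K) (d : ℕ) (hd : f.IsHomogeneous d)
    (hf : ∀ y : Fin (r+1) → K, (∀ i, y i ≠ 0) → eval y f = 0) :
    f ∈ Ideal.span (Set.range fun k : Fin r =>
      (X k.castSucc ^ (Fintype.card K - 1) - X (Fin.last r) ^ (Fintype.card K - 1) :
        MvPolynomial (Fin (r+1)) K)) := by
  classical
  set J := Ideal.span (Set.range fun k : Fin r =>
      (X k.castSucc ^ (Fintype.card K - 1) - X (Fin.last r) ^ (Fintype.card K - 1) :
        MvPolynomial (Fin (r+1)) K)) with hJ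
  have hc := Fintype.one_lt_card (α := K)
  obtain ⟨m, hm⟩ : ∃ m, Fintype.card K - 1 = m + 1 := ⟨Fintype.card K - 2, by omega⟩
  have hs := aux_char_sum (n := r+1) (fun i t => if i = t then 1 else 0) f (by
    intro x hx
    have : (fun j : Fin (r+1) => ∏ t, x t ^ (if j = t then 1 else 0)) = x := by
      funext j; simp [pow_ite]
    rw [this]; exact hf x hx)
  simp only [mul_ite, mul_one, mul_zero, Finset.sum_ite_eq', Finset.mem_univ, if_true] at hs
  rw [hm] at hs hJ
  rw [← Ideal.Quotient.eq_zero_iff_mem]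
  set π := Ideal.Quotient.mk J
  have hX : ∀ i, π (X i) ^ (m+1) = π (X (Fin.last r)) ^ (m+1) := by
    intro i
    induction i using Fin.lastCases with
    | last => rfl
    | cast k =>
      rw [← map_pow, ← map_pow, Ideal.Quotient.mk_eq_mk_iff_sub_mem, hJ]
      exact Ideal.subset_span ⟨k, rfl⟩
  set u := π (X (Fin.last r)) ^ (m+1)
  have hmon : ∀ a ∈ f.support, π (monomial a (coeff a f)) =
      π (C (coeff a f)) * ((∏ i, π (X i) ^ (a i % (m+1))) *
        u ^ ((d - ∑ i, a i % (m+1)) / (m+1))) := by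
    intro a ha
    have hda : ∑ j, a j = d := by
      have := hd (mem_support_iff.1 ha)
      rw [← this]
      simp [Finsupp.weight_apply, Finsupp.sum_fintype]
    have hk : (d - ∑ i, a i % (m+1)) / (m+1) = ∑ i, a i / (m+1) := by
      have : d = ∑ i, a i % (m+1) + (m+1) * ∑ i, a i / (m+1) := by
        rw [← hda, Finset.mul_sum, ← Finset.sum_add_distrib]
        exact Finset.sum_congr rfl fun i _ => (Nat.mod_add_div _ _).symm
      rw [this, Nat.add_sub_cancel_left, Nat.mul_div_cancel_left _ (Nat.succ_pos m)]
    rw [hk, monomial_eq, map_mul, Finsupp.prod_fintype _ _ (by simp), map_prod,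
      ← Finset.prod_pow_eq_pow_sum, ← Finset.prod_mul_distrib]
    congr 1
    refine Finset.prod_congr rfl fun i _ => ?_
    rw [← hX i, ← pow_mul, ← pow_add, Nat.mod_add_div, map_pow]
  rw [f.as_sum, map_sum, Finset.sum_congr rfl hmon,
    ← Finset.sum_fiberwise_of_maps_to (t := f.support.image (fun a i => a i % (m+1)))
      (g := fun a i => a i % (m+1)) (fun a ha => Finset.mem_image_of_mem _ ha)]
  apply Finset.sum_eq_zero
  intro b hb
  have : ∀ a ∈ f.support.filter (fun a => (fun i => a i % (m+1)) = b), 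
      π (C (coeff a f)) * ((∏ i, π (X i) ^ (a i % (m+1))) *
        u ^ ((d - ∑ i, a i % (m+1)) / (m+1))) = π (C (coeff a f)) * ((∏ i, π (X i) ^ (b i)) *
        u ^ ((d - ∑ i, b i) / (m+1))) := by
    intro a ha
    rw [Finset.mem_filter] at ha
    rw [← ha.2]
  rw [Finset.sum_congr rfl this, ← Finset.sum_mul, ← map_sum, ← map_sum]
  have hz : ∑ a ∈ f.support.filter (fun a => (fun i => a i % (m+1)) = b), coeff a f = 0 := by
    rw [← hs (fun i => m * b i)]
    refine Finset.sum_congr (Finset.filter_congr fun a _ => ?_) fun _ _ => rfl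
    rw [Finset.mem_image] at hb
    obtain ⟨a0, _, rfl⟩ := hb
    rw [funext_iff]
    refine forall_congr' fun i => ?_
    change a i ≡ a0 i [MOD (m+1)] ↔ _
    have e1 : (a0 i % (m+1)) + m * (a0 i % (m+1)) ≡ 0 [MOD (m+1)] :=
      (Nat.modEq_zero_iff_dvd).2 ⟨a0 i % (m+1), by ring⟩
    have e2 : a0 i % (m+1) ≡ a0 i [MOD (m+1)] := Nat.mod_modEq _ _
    rw [← Nat.modEq_zero_iff_dvd]
    constructor
    · intro h
      exact ((h.trans e2.symm).add_right _).trans e1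
    · intro h
      exact (Nat.ModEq.add_right_cancel' _ (h.trans e1.symm)).trans e2
  rw [hz]
  simp

lemma aux_forward {K : Type} [Field K] [Fintype K] {n r : ℕ}
    (v : Fin (r+1) → Fin n → ℕ) (hv01 : ∀ i t, v i t ≤ 1)
    (hclutter : ∀ i j : Fin (r+1), i ≠ j → ¬ ∀ t, v i t ≤ v j t)
    (g : Fin r → MvPolynomial (Fin (r+1)) K)
    (hg : ∀ i, ∃ e, (g i).IsHomogeneous e)
    (hgv : ∀ i, ∀ x : Fin n → K, (∀ t, x t ≠ 0) →
            eval (fun j => ∏ t, x t ^ v j t) (g i) = 0)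
    (hP : ∀ k : Fin r, (X k.castSucc ^ (Fintype.card K - 1) - X (Fin.last r) ^ (Fintype.card K - 1) :
        MvPolynomial (Fin (r+1)) K) ∈ Ideal.span (Set.range g))
    (y : Fin (r+1) → K) (hy : ∀ i, y i ≠ 0) (k : Fin r) : eval y (g k) = 0 := by
  classical
  have hc := Fintype.one_lt_card (α := K)
  set m := Fintype.card K - 1 with hm
  have hm0 : m ≠ 0 := by omega
  choose e he using hg
  simp_rw [Ideal.mem_span_range_iff_exists_fun] at hP
  choose h hh using hP
  have hlow : ∀ k b i, b < m → coeff (Finsupp.single i b) (g k) = 0 := fun k b i hb =>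
    aux_low v hv01 hclutter (g k) (e k) (he k) (hgv k) b hb i
  have hmul : ∀ i k j, coeff (Finsupp.single j m) (h i k * g k) =
      coeff 0 (h i k) * coeff (Finsupp.single j m) (g k) := by
    intro i k j
    rw [coeff_mul, Finsupp.antidiagonal_single, Finset.sum_map,
      Finset.sum_eq_single (0, m)]
    · simp
    · rintro ⟨a, b⟩ hab hne
      rw [Finset.HasAntidiagonal.mem_antidiagonal] at hab
      simp only [Prod.map, Function.Embedding.coe_prodMap, Function.Embedding.coeFn_mk] at *
      have : b < m := by
        rcases Nat.eq_zero_or_pos a with h0 | h0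
        · exfalso; apply hne; subst h0; simp at hab; rw [hab]
        · omega
      rw [hlow k b j this, mul_zero]
    · simp
  let A : Matrix (Fin r) (Fin r) K := fun i k => coeff 0 (h i k)
  let Φ : Matrix (Fin r) (Fin r) K := fun k j => coeff (Finsupp.single j.castSucc m) (g k)
  have hAΦ : A * Φ = 1 := by
    ext i j
    rw [Matrix.mul_apply]
    have := congrArg (coeff (Finsupp.single j.castSucc m)) (hh i)
    rw [coeff_sum] at this
    simp_rw [hmul] at this
    change ∑ k, coeff 0 (h i k) * coeff (Finsupp.single j.castSucc m) (g k) = _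
    rw [this, coeff_sub, coeff_X_pow, coeff_X_pow, Matrix.one_apply]
    have h1 : Finsupp.single (Fin.last r) m ≠ Finsupp.single j.castSucc m := by
      intro h
      rw [Finsupp.single_left_inj hm0] at h
      exact (Fin.castSucc_lt_last j).ne h.symm
    rw [if_neg h1, sub_zero]
    simp only [Finsupp.single_left_inj hm0, Fin.castSucc_inj]
  have hΦA : Φ * A = 1 := mul_eq_one_comm.mp hAΦ
  have hem : ∀ k, e k = m := by
    intro k
    by_contra hne
    have h1 : (Φ * A) k k = 1 := by rw [hΦA]; simp
    rw [Matrix.mul_apply, Finset.sum_eq_zero] at h1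
    · exact zero_ne_one h1
    · intro j _
      have : Φ k j = 0 := by
        by_contra h0
        have := he k h0
        simp [Finsupp.weight_apply] at this
        exact hne this.symm
      rw [this, zero_mul]
  have hcomp : ∀ i, (X i.castSucc ^ m - X (Fin.last r) ^ m : MvPolynomial (Fin (r+1)) K) =
      ∑ k, C (A i k) * g k := by
    intro i
    have hPh : (X i.castSucc ^ m - X (Fin.last r) ^ m : MvPolynomial (Fin (r+1)) K).IsHomogeneous m :=
      (isHomogeneous_X_pow _ _).sub (isHomogeneous_X_pow _ _)
    have hgm : ∀ k, (g k).IsHomogeneous m := fun k => hem k ▸ he k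
    ext a
    by_cases ha : a.degree = m
    · rw [← hh i, coeff_sum, coeff_sum]
      refine Finset.sum_congr rfl fun k _ => ?_
      rw [coeff_C_mul, coeff_mul, Finset.sum_eq_single (0, a)]
      · rintro ⟨b, c⟩ hbc hne
        rw [Finset.HasAntidiagonal.mem_antidiagonal] at hbc
        simp only at hbc ⊢
        have : coeff c (g k) = 0 := by
          apply (hgm k).coeff_eq_zero
          intro hcm
          have h2 : b.degree + c.degree = m := by rw [← map_add, hbc, ha]
          have h3 : b.degree = 0 := by omega
          rw [Finsupp.degree_eq_zero_iff] at h3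
          subst h3
          simp at hbc
          exact hne (by rw [hbc])
        rw [this, mul_zero]
      · simp
    · rw [hPh.coeff_eq_zero ha, coeff_sum, Finset.sum_eq_zero]
      intro k _
      rw [coeff_C_mul, (hgm k).coeff_eq_zero ha, mul_zero]
  have hev : A.mulVec (fun k => eval y (g k)) = 0 := by
    funext i
    have := congrArg (eval y) (hcomp i)
    simp only [map_sub, map_pow, eval_X, map_sum, map_mul, eval_C] at this
    rw [hm, FiniteField.pow_card_sub_one_eq_one _ (hy _),
      FiniteField.pow_card_sub_one_eq_one _ (hy _), sub_self] at this
    exact this.symm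
  have := congrArg (Φ.mulVec) hev
  rw [Matrix.mulVec_mulVec, hΦA, Matrix.one_mulVec, Matrix.mulVec_zero] at this
  exact congrFun this k

theorem stmt_15 (K : Type) [Field K] [Fintype K] (q n s : ℕ)
    (hK : Fintype.card K = q) (hs : 1 ≤ s)
    (v : Fin s → Fin n → ℕ) (hv01 : ∀ i t, v i t ≤ 1)
    (hinj : Function.Injective v)
    (hclutter : ∀ i j : Fin s, i ≠ j → ¬ ∀ t, v i t ≤ v j t) :
    (∃ g : Fin (s - 1) → MvPolynomial (Fin s) K,
        (∀ i, ∃ e, (g i).IsHomogeneous e) ∧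
        Ideal.span {f : MvPolynomial (Fin s) K |
          (∃ e, f.IsHomogeneous e) ∧
          ∀ x : Fin n → K, (∀ t, x t ≠ 0) →
            eval (fun j : Fin s => ∏ t, x t ^ v j t) f = 0} =
          Ideal.span (Set.range g)) ↔
    toricSet K hs v = projTorus K s := by
  obtain ⟨r, rfl⟩ : ∃ r, s = r + 1 := ⟨s - 1, by omega⟩
  rw [aux_toric_iff]
  have hPh : ∀ k : Fin r, (X k.castSucc ^ (Fintype.card K - 1) -
      X (Fin.last r) ^ (Fintype.card K - 1) : MvPolynomial (Fin (r+1)) K).IsHomogeneous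
        (Fintype.card K - 1) := fun k =>
      (isHomogeneous_X_pow _ _).sub (isHomogeneous_X_pow _ _)
  have hPv : ∀ k : Fin r, ∀ y : Fin (r+1) → K, (∀ i, y i ≠ 0) →
      eval y (X k.castSucc ^ (Fintype.card K - 1) -
      X (Fin.last r) ^ (Fintype.card K - 1) : MvPolynomial (Fin (r+1)) K) = 0 := by
    intro k y hy
    simp only [map_sub, map_pow, eval_X]
    rw [FiniteField.pow_card_sub_one_eq_one _ (hy _),
      FiniteField.pow_card_sub_one_eq_one _ (hy _), sub_self]
  have hxv : ∀ x : Fin n → K, (∀ t, x t ≠ 0) → ∀ j, ∏ t, x t ^ v j t ≠ 0 := fun x hx j =>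
    Finset.prod_ne_zero_iff.mpr (fun t _ => pow_ne_zero _ (hx t))
  have hspan : ∀ (S : Set (MvPolynomial (Fin (r+1)) K)) (y : Fin (r+1) → K),
      (∀ f ∈ S, eval y f = 0) → ∀ f ∈ Ideal.span S, eval y f = 0 := by
    intro S y hS f hf
    have : Ideal.span S ≤ RingHom.ker (eval y) := Ideal.span_le.2 fun f hf => hS f hf
    exact this hf
  constructor
  · rintro ⟨g, hg, hI⟩
    change Fin r → _ at g
    apply aux_sep hs v
    intro f hfh hfv y hy
    have hfI := Ideal.subset_span (s := {f : MvPolynomial (Fin (r+1)) K |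
          (∃ e, f.IsHomogeneous e) ∧
          ∀ x : Fin n → K, (∀ t, x t ≠ 0) →
            eval (fun j : Fin (r+1) => ∏ t, x t ^ v j t) f = 0}) ⟨hfh, hfv⟩
    rw [hI] at hfI
    refine hspan _ y ?_ f hfI
    rintro _ ⟨k, rfl⟩
    refine aux_forward v hv01 hclutter g hg ?_ ?_ y hy k
    · intro i x hx
      have hgi : g i ∈ Ideal.span (Set.range g) := Ideal.subset_span ⟨i, rfl⟩
      erw [← hI] at hgi
      exact hspan _ _ (fun f hf => hf.2 x hx) _ hgi
    · intro k
      erw [← hI]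
      exact Ideal.subset_span ⟨⟨_, hPh k⟩, fun x hx => hPv k _ (hxv x hx)⟩
  · intro h
    refine ⟨fun k : Fin r => X k.castSucc ^ (Fintype.card K - 1) -
      X (Fin.last r) ^ (Fintype.card K - 1), fun k => ⟨_, hPh k⟩, le_antisymm ?_ ?_⟩
    · rw [Ideal.span_le]
      rintro f ⟨⟨d, hd⟩, hfv⟩
      refine aux_torus f d hd ?_
      intro y hy
      obtain ⟨x, hx, c, hc⟩ := h y hy
      have : y = c • (fun j => ∏ t, x t ^ v j t) := funext hc
      rw [this, aux_smul f d hd, hfv x hx, mul_zero]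
    · rw [Ideal.span_le]
      rintro _ ⟨k, rfl⟩
      exact Ideal.subset_span ⟨⟨_, hPh k⟩, fun x hx => hPv k _ (hxv x hx)⟩
end

section
/- Let K be a finite field with q elements, let v_1,…,v_s ∈ {0,1}^n be the characteristic vectors of the edges of a clutter, and let X be the algebraic toric set parameterized by y^{v_1},…,y^{v_s}. If every homogeneous polynomial of K[t_1,…,t_s] that vanishes at every point of X belongs to the ideal (t_1^{q−1} − t_s^{q−1}, …, t_{s−1}^{q−1} − t_s^{q−1}), then X equals the projective torus T = {[x] : x ∈ (K*)^s} in ℙ^{s−1}. -/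
open MvPolynomial

/-- Let `v_1,…,v_s ∈ {0,1}^n` be the characteristic vectors of the edges of a clutter
and `X` the algebraic toric set they parameterize. If every homogeneous polynomial
vanishing at every point of `X` lies in the ideal
`(t_1^{q-1} - t_s^{q-1},…,t_{s-1}^{q-1} - t_s^{q-1})`, then `X` equals the projective
torus in `ℙ^(s-1)`. -/
theorem stmt_16 (K : Type) [Field K] [Fintype K] (q n s : ℕ)
    (hK : Fintype.card K = q) (hs : 1 ≤ s)
    (v : Fin s → Fin n → ℕ) (hv01 : ∀ i t, v i t ≤ 1)
    (hinj : Function.Injective v)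
    (hclutter : ∀ i j : Fin s, i ≠ j → ¬ ∀ t, v i t ≤ v j t)
    (hvan : ∀ (e : ℕ) (f : MvPolynomial (Fin s) K), f.IsHomogeneous e →
      (∀ x : Fin n → K, (∀ t, x t ≠ 0) →
        eval (fun j : Fin s => ∏ t, x t ^ v j t) f = 0) →
      f ∈ Ideal.span {h : MvPolynomial (Fin s) K |
        ∃ i : Fin s, (i : ℕ) < s - 1 ∧
          h = X i ^ (q - 1) - X (⟨s - 1, by omega⟩ : Fin s) ^ (q - 1)}) :
    toricSet K hs v = projTorus K s := by
  classical
  have hw0 : ∀ x : Fin n → K, (∀ t, x t ≠ 0) → ∀ j, (∏ t, x t ^ v j t) ≠ 0 := fun x hx j =>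
    Finset.prod_ne_zero_iff.mpr (fun t _ => pow_ne_zero _ (hx t))
  ext p
  constructor
  · rintro ⟨x, hx, rfl⟩ i
    generalize_proofs h0
    obtain ⟨a, ha⟩ := Projectivization.exists_smul_eq_mk_rep K (fun j => ∏ t, x t ^ v j t) h0
    rw [← ha]
    simp only [Pi.smul_apply, Units.smul_def, smul_eq_mul]
    exact mul_ne_zero a.ne_zero (hw0 x hx i)
  · intro hp
    by_contra hpX
    have key : ∀ x : Fin n → Kˣ, ∃ ij : Fin s × Fin s,
        (∏ t, (x t : K) ^ v ij.1 t) * p.rep ij.2 - (∏ t, (x t : K) ^ v ij.2 t) * p.rep ij.1 ≠ 0 := by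
      intro x
      by_contra hcon
      push Not at hcon
      apply hpX
      have hx : ∀ t, (x t : K) ≠ 0 := fun t => (x t).ne_zero
      refine ⟨fun t => (x t : K), hx, ?_⟩
      rw [← p.mk_rep, Projectivization.mk_eq_mk_iff']
      refine ⟨p.rep ⟨0, hs⟩ / (∏ t, (x t : K) ^ v ⟨0, hs⟩ t), ?_⟩
      funext j
      have h1 := hcon (⟨0, hs⟩, j)
      have h2 := hw0 _ hx ⟨0, hs⟩
      simp only [Pi.smul_apply, smul_eq_mul] at h1 h2 ⊢
      rw [div_mul_eq_mul_div, div_eq_iff h2]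
      linear_combination -h1
    choose ij hij using key
    let f : MvPolynomial (Fin s) K := ∏ x : Fin n → Kˣ,
      (C (∏ t, (x t : K) ^ v (ij x).1 t) * X (ij x).2
        - C (∏ t, (x t : K) ^ v (ij x).2 t) * X (ij x).1)
    have hf : f.IsHomogeneous (∑ _x : Fin n → Kˣ, 1) := by
      apply IsHomogeneous.prod
      intro x _
      exact (isHomogeneous_C_mul_X _ _).sub (isHomogeneous_C_mul_X _ _)
    have hmem := hvan _ f hf (by
      intro x hx
      simp only [f, map_prod]
      apply Finset.prod_eq_zero (Finset.mem_univ (fun t => Units.mk0 (x t) (hx t)))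
      simp only [map_sub, map_mul, map_prod, eval_C, eval_X, Units.val_mk0]
      ring)
    have hzero : f ∈ RingHom.ker (eval p.rep) := by
      refine (Ideal.span_le.mpr ?_) hmem
      rintro h ⟨i, _, rfl⟩
      simp only [SetLike.mem_coe, RingHom.mem_ker, map_sub, map_pow, eval_X]
      rw [← hK, FiniteField.pow_card_sub_one_eq_one _ (hp _),
        FiniteField.pow_card_sub_one_eq_one _ (hp _), sub_self]
    rw [RingHom.mem_ker] at hzero
    simp only [f, map_prod] at hzero
    obtain ⟨x, _, hx⟩ := Finset.prod_eq_zero_iff.mp hzero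
    apply hij x
    simpa only [map_sub, map_mul, map_prod, eval_C, eval_X] using hx
end

section
/- Let K be a finite field with q elements, let v_1,…,v_s ∈ {0,1}^n be the characteristic vectors of the edges of a clutter, and let X be the algebraic toric set parameterized by y^{v_1},…,y^{v_s}. Then H_X(d) = |X| for every d ≥ (q−2)(s−1); that is, the index of regularity of S/I(X) is at most (q−2)(s−1). Moreover, if the vanishing ideal I(X) is a complete intersection and q ≥ 3, s ≥ 2, then H_X(d) < |X| for every d with 0 ≤ d < (q−2)(s−1), so the index of regularity equals (q−2)(s−1). -/
open MvPolynomial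

/-- The Hilbert function of a set `Y` of points of projective space (equivalently the
dimension of the parameterized code of order `d` on `Y`): the `K`-dimension of the
space of functions on `Y` of the form `[P] ↦ F(P)/P_{i0}^d` with `F` homogeneous of
degree `d`. -/
noncomputable def hilbFn (K : Type) [Field K] {ι : Type}
    (Y : Set (Projectivization K (ι → K))) (i0 : ι) (d : ℕ) : ℕ :=
  Module.finrank K ↥(Submodule.span K
    {f : ↥Y → K | ∃ F : MvPolynomial ι K, F.IsHomogeneous d ∧
      ∀ p : ↥Y, f p = eval p.1.rep F / (p.1.rep i0) ^ d})

/-- The minimum distance of the parameterized (evaluation) code of order `d` on a set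
`Y` of points of projective space: the least number of points of `Y` at which a
homogeneous polynomial of degree `d` not vanishing identically on `Y` is nonzero. -/
noncomputable def minDist (K : Type) [Field K] {ι : Type}
    (Y : Set (Projectivization K (ι → K))) (d : ℕ) : ℕ :=
  sInf {n | ∃ F : MvPolynomial ι K, F.IsHomogeneous d ∧
    (∃ p ∈ Y, eval p.rep F ≠ 0) ∧
    n = Set.ncard {p ∈ Y | eval p.rep F ≠ 0}}

namespace S17

lemma coeff_mul_aux {σ K : Type} [Field K] (c g : MvPolynomial σ K) (e : σ →₀ ℕ)
    (h : ∀ a b : σ →₀ ℕ, a + b = e → a ≠ 0 → coeff b g = 0) :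
    coeff e (c * g) = coeff 0 c * coeff e g := by
  classical
  rw [coeff_mul, Finset.sum_eq_single ((0 : σ →₀ ℕ), e)]
  · rintro ⟨a, b⟩ hab hne
    rw [Finset.HasAntidiagonal.mem_antidiagonal] at hab
    have ha : a ≠ 0 := by
      rintro rfl
      apply hne
      simp at hab
      simp [hab]
    simp [h a b hab ha]
  · intro hn
    exact absurd (by simp) hn

lemma exp_unique {n s : ℕ} (v : Fin s → Fin n → ℕ) (hv01 : ∀ i t, v i t ≤ 1)
    (hclutter : ∀ i j : Fin s, i ≠ j → ¬ ∀ t, v i t ≤ v j t)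
    (i : Fin s) (b : ℕ) (m : Fin s →₀ ℕ) (hm : ∑ j, m j = b)
    (he : ∀ t, ∑ j, m j * v j t = b * v i t) : m = Finsupp.single i b := by
  have h0 : ∀ j, j ≠ i → m j = 0 := by
    intro j hj
    by_contra hmj
    apply hclutter i j hj.symm
    intro t
    by_contra hlt
    push Not at hlt
    have h1 : v j t = 0 := by have := hv01 i t; omega
    have h2 : v i t = 1 := by have := hv01 i t; omega
    have h3 := he t
    rw [h2, mul_one, ← hm] at h3
    have h4 : ∑ j, m j * v j t < ∑ j, m j := by
      apply Finset.sum_lt_sum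
      · intro k _
        calc m k * v k t ≤ m k * 1 := Nat.mul_le_mul_left _ (hv01 k t)
          _ = m k := mul_one _
      · exact ⟨j, Finset.mem_univ _, by rw [h1]; omega⟩
    omega
  ext j
  by_cases hj : j = i
  · subst hj
    rw [Finsupp.single_eq_same, ← hm]
    rw [Finset.sum_eq_single j (fun k _ hk => h0 k hk) (by simp)]
  · rw [h0 j hj, Finsupp.single_eq_of_ne hj]

lemma coeff_zero_of_vanish (K : Type) [Field K] [Fintype K] {n s : ℕ}
    (v : Fin s → Fin n → ℕ) (hv01 : ∀ i t, v i t ≤ 1)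
    (hclutter : ∀ i j : Fin s, i ≠ j → ¬ ∀ t, v i t ≤ v j t)
    (g : MvPolynomial (Fin s) K) (e : ℕ) (hg : g.IsHomogeneous e)
    (hvan : ∀ x : Fin n → K, (∀ t, x t ≠ 0) →
            eval (fun j : Fin s => ∏ t, x t ^ v j t) g = 0)
    (i : Fin s) (b : ℕ) (hb : b < Fintype.card K - 1) :
    coeff (Finsupp.single i b) g = 0 := by
  classical
  by_contra hne
  have hbe : b = e := by
    have := hg hne
    simpa [Finsupp.weight_apply] using this
  subst hbe
  let E : (Fin s →₀ ℕ) → (Fin n →₀ ℕ) := fun m =>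
    Finsupp.equivFunOnFinite.symm (fun t => ∑ j, m j * v j t)
  let φ : MvPolynomial (Fin n) K := ∑ m ∈ g.support, monomial (E m) (coeff m g)
  have hdeg : ∀ m ∈ g.support, ∑ j, m j = b := by
    intro m hm
    have := hg (mem_support_iff.mp hm)
    rw [← this]
    simp [Finsupp.weight_apply, Finsupp.sum_fintype]
  have hφ : φ = 0 := by
    apply eq_zero_of_eval_zero_at_prod_finset φ (fun _ => Finset.univ.erase 0)
    · intro t
      rw [Finset.card_erase_of_mem (Finset.mem_univ _), Finset.card_univ]
      rw [degreeOf_lt_iff (by omega)]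
      intro m hm
      have h1 := support_sum hm
      rw [Finset.mem_biUnion] at h1
      obtain ⟨m', hm', h2⟩ := h1
      have h3 := support_monomial_subset h2
      rw [Finset.mem_singleton] at h3
      subst h3
      have : ∑ j, m' j * v j t ≤ ∑ j, m' j := by
        apply Finset.sum_le_sum
        intro k _
        calc m' k * v k t ≤ m' k * 1 := Nat.mul_le_mul_left _ (hv01 k t)
          _ = m' k := mul_one _
      rw [hdeg m' hm'] at this
      calc E m' t = ∑ j, m' j * v j t := rfl
        _ ≤ b := this
        _ < _ := hb
    · intro x hx
      have h1 := hvan x (fun t => by simpa using hx t)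
      rw [← h1, eval_eq' _ g, map_sum]
      apply Finset.sum_congr rfl
      intro m hm
      rw [eval_monomial, Finsupp.prod_fintype _ _ (by simp)]
      congr 1
      simp only [← Finset.prod_pow, ← pow_mul]
      rw [Finset.prod_comm]
      apply Finset.prod_congr rfl
      intro t _
      rw [Finset.prod_pow_eq_pow_sum]
      congr 1
      change ∑ j, m j * v j t = _
      exact Finset.sum_congr rfl (fun j _ => mul_comm _ _)
  apply hne
  have h2 : coeff (E (Finsupp.single i b)) φ = coeff (Finsupp.single i b) g := by
    rw [coeff_sum, Finset.sum_eq_single (Finsupp.single i b)]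
    · rw [coeff_monomial, if_pos rfl]
    · intro m hm hmne
      rw [coeff_monomial, if_neg]
      intro heq
      apply hmne
      apply exp_unique v hv01 hclutter i b m (hdeg m hm)
      intro t
      have := DFunLike.congr_fun heq t
      change ∑ j, m j * v j t = ∑ j, (Finsupp.single i b) j * v j t at this
      rw [this, Finset.sum_eq_single i]
      · simp
      · intro j _ hj
        simp [Finsupp.single_eq_of_ne hj]
      · simp
    · intro h
      rw [coeff_monomial, if_pos rfl]
      exact notMem_support_iff.mp h
  rw [← h2, hφ, coeff_zero]

/-- every generator vanishes on the torus -/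
lemma gens_vanish (K : Type) [Field K] [Fintype K] {n m : ℕ}
    (v : Fin (m+1) → Fin n → ℕ) (hv01 : ∀ i t, v i t ≤ 1)
    (hclutter : ∀ i j : Fin (m+1), i ≠ j → ¬ ∀ t, v i t ≤ v j t)
    (hq : 3 ≤ Fintype.card K)
    (g : Fin m → MvPolynomial (Fin (m+1)) K)
    (hg : ∀ i, ∃ e, (g i).IsHomogeneous e)
    (hvan : ∀ k, ∀ x : Fin n → K, (∀ t, x t ≠ 0) →
            eval (fun j : Fin (m+1) => ∏ t, x t ^ v j t) (g k) = 0)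
    (hmem : ∀ i : Fin m, (X i.succ ^ (Fintype.card K - 1) - X 0 ^ (Fintype.card K - 1) :
        MvPolynomial (Fin (m+1)) K) ∈ Ideal.span (Set.range g))
    (y : Fin (m+1) → K) (hy : ∀ j, y j ≠ 0) (k : Fin m) : eval y (g k) = 0 := by
  classical
  set r := Fintype.card K - 1 with hr
  have hr0 : r ≠ 0 := by omega
  let h : Fin m → MvPolynomial (Fin (m+1)) K := fun i => X i.succ ^ r - X 0 ^ r
  let π : MvPolynomial (Fin (m+1)) K →ₗ[K] (Fin (m+1) → K) :=
    LinearMap.pi (fun i => lcoeff K (Finsupp.single i r))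
  have hπ : ∀ f i, π f i = coeff (Finsupp.single i r) f := fun f i => rfl
  have hz : ∀ k i b, b < r → coeff (Finsupp.single i b) (g k) = 0 := by
    intro k i b hb
    obtain ⟨e, he⟩ := hg k
    exact coeff_zero_of_vanish K v hv01 hclutter (g k) e he (hvan k) i b hb
  have hcomb : ∀ i, ∃ c : Fin m → MvPolynomial (Fin (m+1)) K, ∑ k, c k * g k = h i := by
    intro i
    have := hmem i
    rw [Ideal.mem_span_range_iff_exists_fun] at this
    exact this
  have hπh : ∀ i (j : Fin m), π (h i) j.succ = if j = i then 1 else 0 := by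
    intro i j
    rw [hπ]
    simp only [h, coeff_sub, coeff_X_pow]
    have h1 : (Finsupp.single i.succ r = Finsupp.single j.succ r) ↔ j = i := by
      rw [Finsupp.single_left_inj hr0]
      simp [eq_comm]
    have h2 : ¬ (Finsupp.single (0 : Fin (m+1)) r = Finsupp.single j.succ r) := by
      rw [Finsupp.single_left_inj hr0]
      exact (Fin.succ_ne_zero j).symm
    simp [h1, h2]
  have hli : LinearIndependent K (π ∘ h) := by
    rw [Fintype.linearIndependent_iff]
    intro c hc i
    have := congrFun hc i.succ
    simpa [hπh] using this
  have hlih : LinearIndependent K h := LinearIndependent.of_comp π hli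
  -- step 1
  have hle : Submodule.span K (Set.range (π ∘ h)) ≤ Submodule.span K (Set.range (π ∘ g)) := by
    rw [Submodule.span_le]
    rintro _ ⟨i, rfl⟩
    obtain ⟨c, hc⟩ := hcomb i
    have : π (h i) = ∑ k, coeff 0 (c k) • π (g k) := by
      rw [← hc, map_sum]
      refine Finset.sum_congr rfl (fun k _ => ?_)
      ext j
      rw [Pi.smul_apply, hπ, hπ, smul_eq_mul]
      apply coeff_mul_aux
      intro a b hab ha
      have hb : b = Finsupp.single j (b j) := by
        ext l
        by_cases hl : l = j
        · subst hl; simp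
        · have := DFunLike.congr_fun hab l
          rw [Finsupp.add_apply, Finsupp.single_eq_of_ne hl] at this
          rw [Finsupp.single_eq_of_ne hl]; omega
      rw [hb]
      apply hz
      have h1 := DFunLike.congr_fun hab j
      rw [Finsupp.add_apply, Finsupp.single_eq_same] at h1
      by_contra hlt
      apply ha
      have hbj : b j = r := by omega
      rw [hbj] at hb
      rw [hb] at hab
      simpa using hab
    change π (h i) ∈ _
    rw [this]
    exact Submodule.sum_mem _ (fun k _ => Submodule.smul_mem _ _
      (Submodule.subset_span ⟨k, rfl⟩))
  have hlig : LinearIndependent K (π ∘ g) := by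
    rw [linearIndependent_iff_card_eq_finrank_span]
    apply le_antisymm
    · have h1 := finrank_span_eq_card hli
      rw [← h1]
      exact Submodule.finrank_mono hle
    · exact finrank_range_le_card _
  have hdeg : ∀ k, (g k).IsHomogeneous r := by
    intro k
    obtain ⟨e, he⟩ := hg k
    have hne := hlig.ne_zero k
    obtain ⟨i, hi⟩ := Function.ne_iff.mp hne
    have h1 : coeff (Finsupp.single i r) (g k) ≠ 0 := hi
    have h2 := he h1
    have h3 : r = e := by simpa [Finsupp.weight_apply] using h2
    rw [h3]; exact he
  have hle2 : Submodule.span K (Set.range h) ≤ Submodule.span K (Set.range g) := by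
    rw [Submodule.span_le]
    rintro _ ⟨i, rfl⟩
    obtain ⟨c, hc⟩ := hcomb i
    have hh : (h i).IsHomogeneous r :=
      (isHomogeneous_X_pow _ _).sub (isHomogeneous_X_pow _ _)
    have : h i = ∑ k, coeff 0 (c k) • g k := by
      ext e
      by_cases hdeg_e : e.degree = r
      · rw [← hc, coeff_sum, coeff_sum]
        refine Finset.sum_congr rfl (fun k _ => ?_)
        rw [coeff_smul, smul_eq_mul]
        apply coeff_mul_aux
        intro a b hab ha
        apply (hdeg k).coeff_eq_zero
        intro hbd
        apply ha
        rw [← hab, map_add, hbd] at hdeg_e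
        rw [← Finsupp.degree_eq_zero_iff]
        omega
      · rw [hh.coeff_eq_zero hdeg_e, coeff_sum]
        symm
        apply Finset.sum_eq_zero
        intro k _
        rw [coeff_smul, (hdeg k).coeff_eq_zero hdeg_e, smul_zero]
    rw [this]
    exact Submodule.sum_mem _ (fun k _ => Submodule.smul_mem _ _
      (Submodule.subset_span ⟨k, rfl⟩))
  have heq : Submodule.span K (Set.range h) = Submodule.span K (Set.range g) := by
    have : FiniteDimensional K (Submodule.span K (Set.range g)) :=
      FiniteDimensional.span_of_finite K (Set.finite_range g)
    apply Submodule.eq_of_le_of_finrank_le hle2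
    rw [finrank_span_eq_card hlih]
    exact finrank_range_le_card _
  have hgk : g k ∈ Submodule.span K (Set.range h) := by
    rw [heq]; exact Submodule.subset_span ⟨k, rfl⟩
  have hker : Submodule.span K (Set.range h) ≤ LinearMap.ker (aeval y : MvPolynomial (Fin (m+1)) K →ₐ[K] K).toLinearMap := by
    rw [Submodule.span_le]
    rintro _ ⟨i, rfl⟩
    simp [h, hr, FiniteField.pow_card_sub_one_eq_one _ (hy _)]
  have := hker hgk
  simpa [aeval_eq_eval] using this

/-- indicator polynomial -/
lemma exists_indicator (K : Type) [Field K] [Fintype K] {m : ℕ} (a : Fin (m+1) → K)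
    (ha : ∀ j, a j ≠ 0) : ∃ G : MvPolynomial (Fin (m+1)) K,
      G.IsHomogeneous ((Fintype.card K - 2) * m) ∧ eval a G ≠ 0 ∧
      ∀ y : Fin (m+1) → K, (∀ j, y j ≠ 0) → eval y G ≠ 0 → ∀ j, y j * a 0 = a j * y 0 := by
  classical
  refine ⟨∏ i : Fin m, ∏ c ∈ (Finset.univ.erase (0:K)).erase (a i.succ / a 0),
    (X i.succ - C c * X 0), ?_, ?_, ?_⟩
  · have h1 : (Fintype.card K - 2) * m = ∑ i : Fin m,
        ∑ c ∈ (Finset.univ.erase (0:K)).erase (a i.succ / a 0), 1 := by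
      have : ∀ i : Fin m, ∑ c ∈ (Finset.univ.erase (0:K)).erase (a i.succ / a 0), 1
          = Fintype.card K - 2 := by
        intro i
        rw [Finset.sum_const, smul_eq_mul, mul_one, Finset.card_erase_of_mem,
          Finset.card_erase_of_mem (Finset.mem_univ _), Finset.card_univ]
        · omega
        · simp [ha]
      simp only [this]
      simp [mul_comm]
    rw [h1]
    apply IsHomogeneous.prod
    intro i _
    apply IsHomogeneous.prod
    intro c _
    apply IsHomogeneous.sub (isHomogeneous_X _ _)
    have := (isHomogeneous_C (Fin (m+1)) c).mul (isHomogeneous_X K (0 : Fin (m+1)))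
    simpa using this
  · rw [map_prod, Finset.prod_ne_zero_iff]
    intro i _
    rw [map_prod, Finset.prod_ne_zero_iff]
    intro c hc
    simp only [Finset.mem_erase] at hc
    simp only [map_sub, map_mul, eval_X, eval_C]
    intro h0
    apply hc.1
    rw [eq_div_iff (ha 0)]
    exact (sub_eq_zero.mp h0).symm
  · intro y hy hne j
    refine Fin.cases (mul_comm _ _) (fun i => ?_) j
    rw [map_prod, Finset.prod_ne_zero_iff] at hne
    have h1 := hne i (Finset.mem_univ _)
    rw [map_prod, Finset.prod_ne_zero_iff] at h1
    by_contra hcon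
    apply h1 (y i.succ / y 0)
    · simp only [Finset.mem_erase, Finset.mem_univ, and_true]
      refine ⟨?_, by simp [hy]⟩
      intro h2
      rw [div_eq_div_iff (hy 0) (ha 0)] at h2
      exact hcon h2
    · simp [hy 0]

lemma toric_rep (K : Type) [Field K] {n s : ℕ} (hs : 1 ≤ s) (v : Fin s → Fin n → ℕ)
    (p : Projectivization K (Fin s → K)) (hp : p ∈ toricSet K hs v) :
    ∃ x : Fin n → K, (∀ t, x t ≠ 0) ∧ ∃ a : K, a ≠ 0 ∧
      p.rep = a • (fun j => ∏ t, x t ^ v j t) := by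
  obtain ⟨x, hx, rfl⟩ := hp
  obtain ⟨a, ha⟩ := Projectivization.exists_smul_eq_mk_rep K (fun j => ∏ t, x t ^ v j t)
    (by
        intro h0
        have h1 := congrFun h0 ⟨0, hs⟩
        simp only [Pi.zero_apply] at h1
        exact Finset.prod_ne_zero_iff.mpr (fun t _ => pow_ne_zero _ (hx t)) h1)
  exact ⟨x, hx, a, a.ne_zero, ha.symm⟩

lemma toric_rep_ne (K : Type) [Field K] {n s : ℕ} (hs : 1 ≤ s) (v : Fin s → Fin n → ℕ)
    (p : Projectivization K (Fin s → K)) (hp : p ∈ toricSet K hs v) (j : Fin s) :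
    p.rep j ≠ 0 := by
  obtain ⟨x, hx, a, ha, h⟩ := toric_rep K hs v p hp
  rw [h]
  exact mul_ne_zero ha (Finset.prod_ne_zero_iff.mpr (fun t _ => pow_ne_zero _ (hx t)))

lemma eq_of_prop {K : Type} [Field K] {m : ℕ} (p : Projectivization K (Fin (m+1) → K))
    (a : Fin (m+1) → K) (ha : a ≠ 0) (ha0 : a 0 ≠ 0)
    (h : ∀ j, p.rep j * a 0 = a j * p.rep 0) : p = Projectivization.mk K a ha := by
  rw [← Projectivization.mk_rep p, Projectivization.mk_eq_mk_iff']
  refine ⟨p.rep 0 / a 0, ?_⟩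
  ext j
  simp only [Pi.smul_apply, smul_eq_mul]
  rw [div_mul_eq_mul_div, div_eq_iff ha0, h j, mul_comm]

lemma part1 (K : Type) [Field K] [Fintype K] {n m : ℕ} (hs : 1 ≤ m + 1)
    (v : Fin (m+1) → Fin n → ℕ) (d : ℕ) (hd : (Fintype.card K - 2) * m ≤ d) :
    hilbFn K (toricSet K hs v) (⟨0, hs⟩ : Fin (m+1)) d = Set.ncard (toricSet K hs v) := by
  classical
  have : Finite (Projectivization K (Fin (m+1) → K)) := Quotient.finite _
  have : Fintype (toricSet K hs v) := Fintype.ofFinite _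
  unfold hilbFn
  have htop : Submodule.span K
    {f : ↥(toricSet K hs v) → K | ∃ F : MvPolynomial (Fin (m+1)) K, F.IsHomogeneous d ∧
      ∀ p : ↥(toricSet K hs v), f p = eval p.1.rep F / (p.1.rep ⟨0, hs⟩) ^ d} = ⊤ := by
    rw [eq_top_iff]
    rintro f -
    rw [pi_eq_sum_univ' f]
    refine Submodule.sum_mem _ (fun p _ => Submodule.smul_mem _ _ ?_)
    obtain ⟨G, hG1, hG2, hG3⟩ := exists_indicator K p.1.rep (toric_rep_ne K hs v p.1 p.2)
    apply Submodule.subset_span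
    have hp0 : p.1.rep 0 ≠ 0 := toric_rep_ne K hs v p.1 p.2 0
    refine ⟨C ((p.1.rep 0) ^ d / ((p.1.rep 0) ^ (d - (Fintype.card K - 2) * m) * eval p.1.rep G))
      * (X 0 ^ (d - (Fintype.card K - 2) * m) * G), ?_, ?_⟩
    · have h1 := (isHomogeneous_C (Fin (m+1)) ((p.1.rep 0) ^ d / ((p.1.rep 0) ^ (d - (Fintype.card K - 2) * m) * eval p.1.rep G))).mul ((isHomogeneous_X_pow (R := K) (0 : Fin (m+1)) (d - (Fintype.card K - 2) * m)).mul hG1)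
      have h2 : 0 + (d - (Fintype.card K - 2) * m + (Fintype.card K - 2) * m) = d := by omega
      rwa [h2] at h1
    · intro r
      change _ = _ / (r.1.rep 0) ^ d
      simp only [map_mul, eval_C, map_pow, eval_X]
      by_cases hrp : p = r
      · subst hrp
        simp
        field_simp
      · have h0 : eval r.1.rep G = 0 := by
          by_contra hne
          apply hrp
          have h1 := hG3 r.1.rep (toric_rep_ne K hs v r.1 r.2) hne
          have h2 := eq_of_prop r.1 p.1.rep p.1.rep_nonzero hp0 h1
          rw [Projectivization.mk_rep] at h2
          exact Subtype.ext h2.symm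
        simp [h0, hrp]
  rw [htop, finrank_top, Module.finrank_fintype_fun_eq_card, ← Nat.card_eq_fintype_card]
  rfl

lemma sum_zero (K : Type) [Field K] [Fintype K] [DecidableEq K] {m : ℕ} (hq : 3 ≤ Fintype.card K)
    (F : MvPolynomial (Fin (m+1)) K) (d : ℕ)
    (hF : F.IsHomogeneous d) (hd : d < (Fintype.card K - 2) * m) :
    ∑ y : Fin m → Kˣ, eval (Fin.cons 1 (fun i => (y i : K)) : Fin (m+1) → K) F
      * ∏ i, (y i : K) = 0 := by
  classical
  simp only [eval_eq', Finset.sum_mul]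
  rw [Finset.sum_comm]
  apply Finset.sum_eq_zero
  intro e he
  have hdeg : e 0 + ∑ i : Fin m, e i.succ = d := by
    have := hF (mem_support_iff.mp he)
    rw [← Fin.sum_univ_succ, ← this]
    simp [Finsupp.weight_apply, Finsupp.sum_fintype]
  obtain ⟨i, hi⟩ : ∃ i : Fin m, e i.succ < Fintype.card K - 2 := by
    by_contra hcon
    push Not at hcon
    have : ∑ i : Fin m, (Fintype.card K - 2) ≤ ∑ i : Fin m, e i.succ :=
      Finset.sum_le_sum (fun i _ => hcon i)
    simp only [Finset.sum_const, Finset.card_univ, Fintype.card_fin, smul_eq_mul] at this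
    rw [mul_comm] at this
    omega
  have h1 : ∀ y : Fin m → Kˣ, (coeff e F * ∏ j, (Fin.cons 1 (fun i => (y i : K)) : Fin (m+1) → K) j ^ e j)
      * ∏ i, (y i : K) = coeff e F * ∏ i, (y i : K) ^ (e i.succ + 1) := by
    intro y
    rw [Fin.prod_univ_succ]
    simp only [Fin.cons_zero, Fin.cons_succ, one_pow, one_mul, pow_succ, Finset.prod_mul_distrib,
      mul_assoc]
  simp only [h1]
  rw [← Finset.mul_sum]
  have h2 := Finset.prod_univ_sum (fun _ : Fin m => (Finset.univ : Finset Kˣ))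
    (fun i (u : Kˣ) => (u : K) ^ (e i.succ + 1))
  rw [Fintype.piFinset_univ] at h2
  rw [← h2]
  rw [Finset.prod_eq_zero (Finset.mem_univ i), mul_zero]
  rw [FiniteField.sum_pow_units, if_neg]
  intro hdvd
  have := Nat.le_of_dvd (by omega) hdvd
  omega

lemma part2 (K : Type) [Field K] [Fintype K] {n m : ℕ} (hs : 1 ≤ m + 1)
    (v : Fin (m+1) → Fin n → ℕ) (hv01 : ∀ i t, v i t ≤ 1)
    (hclutter : ∀ i j : Fin (m+1), i ≠ j → ¬ ∀ t, v i t ≤ v j t)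
    (g : Fin m → MvPolynomial (Fin (m+1)) K)
    (hg : ∀ i, ∃ e, (g i).IsHomogeneous e)
    (hI : Ideal.span {f : MvPolynomial (Fin (m+1)) K |
          (∃ e, f.IsHomogeneous e) ∧
          ∀ x : Fin n → K, (∀ t, x t ≠ 0) →
            eval (fun j : Fin (m+1) => ∏ t, x t ^ v j t) f = 0} =
          Ideal.span (Set.range g))
    (hq : 3 ≤ Fintype.card K) (d : ℕ) (hd : d < (Fintype.card K - 2) * m) :
    hilbFn K (toricSet K hs v) (⟨0, hs⟩ : Fin (m+1)) d < Set.ncard (toricSet K hs v) := by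
  classical
  have : Finite (Projectivization K (Fin (m+1) → K)) := Quotient.finite _
  have : Fintype (toricSet K hs v) := Fintype.ofFinite _
  have hvan : ∀ k, ∀ x : Fin n → K, (∀ t, x t ≠ 0) →
            eval (fun j : Fin (m+1) => ∏ t, x t ^ v j t) (g k) = 0 := by
    intro k x hx
    have h1 : g k ∈ Ideal.span (Set.range g) := Ideal.subset_span ⟨k, rfl⟩
    rw [← hI] at h1
    have h2 : Ideal.span {f : MvPolynomial (Fin (m+1)) K |
          (∃ e, f.IsHomogeneous e) ∧
          ∀ x : Fin n → K, (∀ t, x t ≠ 0) →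
            eval (fun j : Fin (m+1) => ∏ t, x t ^ v j t) f = 0} ≤
        RingHom.ker (eval (fun j : Fin (m+1) => ∏ t, x t ^ v j t)) := by
      rw [Ideal.span_le]
      rintro f ⟨-, hf⟩
      exact hf x hx
    exact h2 h1
  have hmono : ∀ x : Fin n → K, (∀ t, x t ≠ 0) → ∀ j, ∏ t, x t ^ v j t ≠ 0 := fun x hx j =>
    Finset.prod_ne_zero_iff.mpr (fun t _ => pow_ne_zero _ (hx t))
  have hmem : ∀ i : Fin m, (X i.succ ^ (Fintype.card K - 1) - X 0 ^ (Fintype.card K - 1) :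
        MvPolynomial (Fin (m+1)) K) ∈ Ideal.span (Set.range g) := by
    intro i
    rw [← hI]
    apply Ideal.subset_span
    refine ⟨⟨_, (isHomogeneous_X_pow _ _).sub (isHomogeneous_X_pow _ _)⟩, ?_⟩
    intro x hx
    simp only [map_sub, map_pow, eval_X]
    rw [FiniteField.pow_card_sub_one_eq_one _ (hmono x hx _),
      FiniteField.pow_card_sub_one_eq_one _ (hmono x hx _), sub_self]
  have hgv := gens_vanish K v hv01 hclutter hq g hg hvan hmem
  have hT : ∀ (a : Fin (m+1) → K) (ha : ∀ j, a j ≠ 0) (ha' : a ≠ 0),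
      Projectivization.mk K a ha' ∈ toricSet K hs v := by
    intro a ha ha'
    by_contra hcon
    obtain ⟨G, hG1, hG2, hG3⟩ := exists_indicator K a ha
    have hGI : G ∈ Ideal.span (Set.range g) := by
      rw [← hI]
      apply Ideal.subset_span
      refine ⟨⟨_, hG1⟩, ?_⟩
      intro x hx
      by_contra hne
      have h3 := hG3 _ (hmono x hx) hne
      apply hcon
      refine ⟨x, hx, ?_⟩
      rw [Projectivization.mk_eq_mk_iff']
      refine ⟨a 0 / ∏ t, x t ^ v 0 t, ?_⟩
      ext j
      simp only [Pi.smul_apply, smul_eq_mul]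
      rw [div_mul_eq_mul_div, div_eq_iff (hmono x hx 0), ← h3 j, mul_comm]
    have hle : Ideal.span (Set.range g) ≤ RingHom.ker (eval a) := by
      rw [Ideal.span_le]
      rintro _ ⟨k, rfl⟩
      exact hgv a ha k
    exact hG2 (hle hGI)
  -- the points
  let c : (Fin m → Kˣ) → (Fin (m+1) → K) := fun y => Fin.cons 1 (fun i => (y i : K))
  have hc : ∀ y j, c y j ≠ 0 := by
    intro y j
    refine Fin.cases ?_ (fun i => ?_) j
    · simp [c]
    · simp [c]
  have hc' : ∀ y, c y ≠ 0 := fun y h => hc y 0 (congrFun h 0)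
  let P : (Fin m → Kˣ) → toricSet K hs v := fun y => ⟨Projectivization.mk K (c y) (hc' y), hT _ (hc y) _⟩
  have hPinj : Function.Injective P := by
    intro y z hyz
    have h1 := congrArg Subtype.val hyz
    obtain ⟨a, ha⟩ := (Projectivization.mk_eq_mk_iff' K _ _ (hc' y) (hc' z)).mp h1
    have ha1 : a = 1 := by simpa [c] using congrFun ha 0
    subst ha1
    funext i
    have := congrFun ha i.succ
    simp only [one_smul, c, Fin.cons_succ] at this
    exact (Units.ext this).symm
  let L : (toricSet K hs v → K) →ₗ[K] K :=
    ∑ y : Fin m → Kˣ, (∏ i, (y i : K)) • LinearMap.proj (P y)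
  have hL : ∀ f, L f = ∑ y : Fin m → Kˣ, f (P y) * ∏ i, (y i : K) := by
    intro f
    simp [L, mul_comm]
  unfold hilbFn
  have hne : Submodule.span K
    {f : ↥(toricSet K hs v) → K | ∃ F : MvPolynomial (Fin (m+1)) K, F.IsHomogeneous d ∧
      ∀ p : ↥(toricSet K hs v), f p = eval p.1.rep F / (p.1.rep ⟨0, hs⟩) ^ d} ≠ ⊤ := by
    intro htop
    have hle : Submodule.span K
      {f : ↥(toricSet K hs v) → K | ∃ F : MvPolynomial (Fin (m+1)) K, F.IsHomogeneous d ∧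
        ∀ p : ↥(toricSet K hs v), f p = eval p.1.rep F / (p.1.rep ⟨0, hs⟩) ^ d}
        ≤ LinearMap.ker L := by
      rw [Submodule.span_le]
      rintro f ⟨F, hF, hf⟩
      change L f = 0
      rw [hL, ← sum_zero K hq F d hF hd]
      apply Finset.sum_congr rfl
      intro y _
      congr 1
      rw [hf]
      obtain ⟨a, ha⟩ := Projectivization.exists_smul_eq_mk_rep K (c y) (hc' y)
      change eval (Projectivization.mk K (c y) (hc' y)).rep F /
        ((Projectivization.mk K (c y) (hc' y)).rep 0) ^ d = eval (c y) F
      rw [← ha]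
      have h1 : eval (a • c y) F = (a : K) ^ d * eval (c y) F := by
        rw [eval_eq', eval_eq', Finset.mul_sum]
        refine Finset.sum_congr rfl (fun e he => ?_)
        have hdeg : ∑ i, e i = d := by
          have := hF (mem_support_iff.mp he)
          rw [← this]
          simp [Finsupp.weight_apply, Finsupp.sum_fintype]
        have h2 : ∀ i, (a • c y) i = (a : K) * c y i := fun i => rfl
        simp only [h2, mul_pow, Finset.prod_mul_distrib, Finset.prod_pow_eq_pow_sum, hdeg]
        ring
      rw [h1]
      have h2 : (a • c y) 0 = (a : K) := by
        change (a : K) * c y 0 = a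
        simp [c]
      rw [h2]
      field_simp
    rw [htop] at hle
    have h1 : L (Pi.single (P 1) 1) = 0 := hle (Submodule.mem_top)
    rw [hL, Finset.sum_eq_single 1] at h1
    · simp at h1
    · intro y _ hy
      rw [Pi.single_eq_of_ne (fun h => hy (hPinj h)), zero_mul]
    · simp
  have := Submodule.finrank_lt hne
  rw [Module.finrank_fintype_fun_eq_card, ← Nat.card_eq_fintype_card] at this
  exact this

end S17

/-- For the algebraic toric set `X` parameterized by the characteristic vectors of the
edges of a clutter: `H_X(d) = |X|` for all `d ≥ (q-2)(s-1)` (the index of regularity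
of `S/I(X)` is at most `(q-2)(s-1)`), and if `I(X)` is a complete intersection and
`q ≥ 3`, `s ≥ 2`, then `H_X(d) < |X|` for all `d < (q-2)(s-1)` (the index of
regularity equals `(q-2)(s-1)`). -/
theorem stmt_17 (K : Type) [Field K] [Fintype K] (q n s : ℕ)
    (hK : Fintype.card K = q) (hs : 1 ≤ s)
    (v : Fin s → Fin n → ℕ) (hv01 : ∀ i t, v i t ≤ 1)
    (hinj : Function.Injective v)
    (hclutter : ∀ i j : Fin s, i ≠ j → ¬ ∀ t, v i t ≤ v j t) :
    (∀ d : ℕ, (q - 2) * (s - 1) ≤ d →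
      hilbFn K (toricSet K hs v) (⟨0, hs⟩ : Fin s) d = Set.ncard (toricSet K hs v)) ∧
    ((∃ g : Fin (s - 1) → MvPolynomial (Fin s) K,
        (∀ i, ∃ e, (g i).IsHomogeneous e) ∧
        Ideal.span {f : MvPolynomial (Fin s) K |
          (∃ e, f.IsHomogeneous e) ∧
          ∀ x : Fin n → K, (∀ t, x t ≠ 0) →
            eval (fun j : Fin s => ∏ t, x t ^ v j t) f = 0} =
          Ideal.span (Set.range g)) →
      3 ≤ q → 2 ≤ s →
      ∀ d : ℕ, d < (q - 2) * (s - 1) →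
        hilbFn K (toricSet K hs v) (⟨0, hs⟩ : Fin s) d < Set.ncard (toricSet K hs v)) := by
  obtain ⟨m, rfl⟩ : ∃ m, s = m + 1 := ⟨s - 1, by omega⟩
  subst hK
  refine ⟨fun d hd => S17.part1 K hs v d hd, ?_⟩
  rintro ⟨g, hg, hI⟩ hq _ d hd
  exact S17.part2 K hs v hv01 hclutter g hg hI hq d hd
end

section
/- Let K be a finite field with q elements, let v_1,…,v_s ∈ ℕ^n, let X be the algebraic toric set parameterized by y^{v_1},…,y^{v_s}, and let δ_d denote the minimum distance of the parameterized code C_X(d) for d ≥ 1. If δ_d > 1, then δ_{d+1} < δ_d; and if δ_d = 1, then δ_{d+1} = 1. -/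
open MvPolynomial

theorem aux_le (K : Type) [Field K] {ι : Type} (Y : Set (Projectivization K (ι → K))) (d : ℕ)
    (F : MvPolynomial ι K) (hF : F.IsHomogeneous d) (p) (hp : p ∈ Y) (h : eval p.rep F ≠ 0) :
    minDist K Y d ≤ Set.ncard {p ∈ Y | eval p.rep F ≠ 0} :=
  Nat.sInf_le ⟨F, hF, ⟨p, hp, h⟩, rfl⟩

theorem aux_ex (K : Type) [Field K] {ι : Type} (Y : Set (Projectivization K (ι → K))) (d : ℕ)
    (h : minDist K Y d ≠ 0) : ∃ F : MvPolynomial ι K, F.IsHomogeneous d ∧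
    (∃ p ∈ Y, eval p.rep F ≠ 0) ∧
    minDist K Y d = Set.ncard {p ∈ Y | eval p.rep F ≠ 0} :=
  Nat.sInf_mem (Nat.nonempty_of_pos_sInf (Nat.pos_of_ne_zero h))

theorem aux_sep_s19 (K : Type) [Field K] {ι : Type} (p r : Projectivization K (ι → K)) (h : p ≠ r) :
    ∃ L : MvPolynomial ι K, L.IsHomogeneous 1 ∧ eval p.rep L = 0 ∧ eval r.rep L ≠ 0 := by
  by_contra hc
  push Not at hc
  have key : ∀ i j, p.rep i * r.rep j = p.rep j * r.rep i := by
    intro i j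
    have := hc (C (p.rep i) * X j - C (p.rep j) * X i)
      (((isHomogeneous_X K j).C_mul _).sub ((isHomogeneous_X K i).C_mul _))
      (by simp [mul_comm])
    simpa [sub_eq_zero] using this
  apply h
  obtain ⟨i, hi⟩ := Function.ne_iff.mp p.rep_nonzero
  simp only [Pi.zero_apply] at hi
  rw [← p.mk_rep, ← r.mk_rep, eq_comm, Projectivization.mk_eq_mk_iff']
  refine ⟨r.rep i / p.rep i, ?_⟩
  ext j
  have := key i j
  simp only [Pi.smul_apply, smul_eq_mul]
  field_simp
  linear_combination -this

theorem aux_pos (K : Type) [Field K] [Fintype K] {s : ℕ}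
    (Y : Set (Projectivization K (Fin s → K))) (d : ℕ) (F : MvPolynomial (Fin s) K)
    (hF : F.IsHomogeneous d) (p) (hp : p ∈ Y) (h : eval p.rep F ≠ 0) : 1 ≤ minDist K Y d := by
  have hne : {n | ∃ F : MvPolynomial (Fin s) K, F.IsHomogeneous d ∧
    (∃ p ∈ Y, eval p.rep F ≠ 0) ∧
    n = Set.ncard {p ∈ Y | eval p.rep F ≠ 0}}.Nonempty := ⟨_, F, hF, ⟨p, hp, h⟩, rfl⟩
  obtain ⟨G, _, ⟨r, hr, hG⟩, e⟩ := Nat.sInf_mem hne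
  unfold minDist
  rw [e]
  exact (Set.ncard_pos (Set.toFinite _)).mpr ⟨r, hr, hG⟩

/-- For an algebraic toric set `X` parameterized by arbitrary monomials
`y^{v_1},…,y^{v_s}` and `d ≥ 1`: if the minimum distance `δ_d` of `C_X(d)` is
greater than `1` then `δ_{d+1} < δ_d`, and if `δ_d = 1` then `δ_{d+1} = 1`. -/
theorem stmt_19 (K : Type) [Field K] [Fintype K] (q n s d : ℕ)
    (hK : Fintype.card K = q) (hs : 1 ≤ s) (hd : 1 ≤ d)
    (v : Fin s → Fin n → ℕ) :
    (1 < minDist K (toricSet K hs v) d →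
      minDist K (toricSet K hs v) (d + 1) < minDist K (toricSet K hs v) d) ∧
    (minDist K (toricSet K hs v) d = 1 →
      minDist K (toricSet K hs v) (d + 1) = 1) := by
  generalize toricSet K hs v = Y
  constructor
  · intro h
    obtain ⟨F, hF, -, e⟩ := aux_ex K Y d (by omega)
    rw [e] at h ⊢
    obtain ⟨p, r, hp, hr, hpr⟩ := (Set.one_lt_ncard_iff (Set.toFinite _)).mp h
    obtain ⟨L, hL, hLp, hLr⟩ := aux_sep_s19 K p r hpr
    refine (aux_le K Y (d + 1) (F * L) (hF.mul hL) r hr.1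
      (by rw [map_mul]; exact mul_ne_zero hr.2 hLr)).trans_lt ?_
    refine Set.ncard_lt_ncard ⟨?_, fun hsub => ?_⟩ (Set.toFinite _)
    · rintro x ⟨hx, hx2⟩
      rw [map_mul] at hx2
      exact ⟨hx, left_ne_zero_of_mul hx2⟩
    · have := (hsub hp).2
      rw [map_mul, hLp, mul_zero] at this
      exact this rfl
  · intro h
    obtain ⟨F, hF, ⟨p, hp, hFp⟩, e⟩ := aux_ex K Y d (by omega)
    obtain ⟨i, hi⟩ := Function.ne_iff.mp p.rep_nonzero
    have hn : eval p.rep (F * X i) ≠ 0 := by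
      rw [map_mul, eval_X]; exact mul_ne_zero hFp hi
    have hh := hF.mul (isHomogeneous_X K i)
    refine le_antisymm ?_ (aux_pos K Y (d + 1) _ hh p hp hn)
    refine (aux_le K Y (d + 1) _ hh p hp hn).trans ?_
    rw [← h, e]
    refine Set.ncard_le_ncard ?_ (Set.toFinite _)
    rintro x ⟨hx, hx2⟩
    rw [map_mul] at hx2
    exact ⟨hx, left_ne_zero_of_mul hx2⟩
end
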